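/- arXiv:2309.08271 — 6 statements merged into one kernel-verified Lean document; each statement's English description precedes it below -/
import Mathlib

section
/- Let L be a real symmetric positive semidefinite n×n matrix and let M be the Moore–Penrose pseudoinverse of L, i.e. L·M·L = L, M·L·M = M, (L·M)ᵀ = L·M and (M·L)ᵀ = M·L. Let v ∈ ℝⁿ satisfy L·M·v = v. Then 1 + vᵀ·M·v > 0, and the matrix M − (1/(1 + vᵀ·M·v))·(M·v)·(M·v)ᵀ is the Moore–Penrose pseudoinverse of L + v·vᵀ. -/
open Matrix

/-- `M` is the Moore–Penrose pseudoinverse of `L`. -/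
def IsMoorePenroseInv {n : ℕ} (L M : Matrix (Fin n) (Fin n) ℝ) : Prop :=
  L * M * L = L ∧ M * L * M = M ∧ (L * M)ᵀ = L * M ∧ (M * L)ᵀ = M * L

theorem sherman_morrison_pseudoinverse_update {n : ℕ}
    (L M : Matrix (Fin n) (Fin n) ℝ) (hL : L.PosSemidef)
    (hM : IsMoorePenroseInv L M)
    (v : Fin n → ℝ) (hv : L.mulVec (M.mulVec v) = v) :
    0 < 1 + v ⬝ᵥ M.mulVec v ∧
      IsMoorePenroseInv (L + vecMulVec v v)
        (M - (1 / (1 + v ⬝ᵥ M.mulVec v)) •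
          vecMulVec (M.mulVec v) (M.mulVec v)) := by
  obtain ⟨h1, h2, h3, h4⟩ := hM
  have hLt : Lᵀ = L := by have h := hL.1; rwa [IsHermitian, conjTranspose_eq_transpose_of_trivial] at h
  have h3' : Mᵀ * L = L * M := by rw [← h3, transpose_mul, hLt]
  have h4' : L * Mᵀ = M * L := by rw [← h4, transpose_mul, hLt]
  have h1' : L * Mᵀ * L = L := by
    rw [mul_assoc, h3', ← mul_assoc]
    have := congrArg transpose h1
    rw [transpose_mul, transpose_mul, hLt, h3'] at this
    rwa [← mul_assoc] at this
  have e1 : L * M = (M * L) * (L * M) := by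
    rw [← h4', ← mul_assoc, h1']
  have e2 : M * L = (M * L) * (L * M) := by
    have e3 : M * L = (L * M) * (M * L) := by
      rw [← h4', ← mul_assoc, h1]
    have := congrArg transpose e3
    rwa [h4, transpose_mul, h3, h4] at this
  have hc : L * M = M * L := e1.trans e2.symm
  have hMt : Mᵀ = M := by
    have h2' := congrArg transpose h2
    rw [transpose_mul, transpose_mul, hLt] at h2'
    calc Mᵀ = Mᵀ * (L * Mᵀ) := h2'.symm
      _ = Mᵀ * L * M := by rw [h4', ← hc, mul_assoc]
      _ = M := by rw [h3', hc, h2]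
  obtain ⟨w, hw⟩ : ∃ w, w = M *ᵥ v := ⟨_, rfl⟩
  rw [← hw] at hv ⊢
  have hvM : v ᵥ* M = w := by rw [hw, ← vecMul_transpose, hMt]
  have hwL : w ᵥ* L = v := by rw [← hLt, vecMul_transpose, hv]
  have hs : 0 ≤ v ⬝ᵥ w := by
    have := hL.dotProduct_mulVec_nonneg w
    rw [hv, star_trivial, dotProduct_comm] at this
    exact this
  have hpos : 0 < 1 + v ⬝ᵥ w := by linarith
  have hs' : w ⬝ᵥ v = v ⬝ᵥ w := dotProduct_comm _ _
  have hPv : (L * M) *ᵥ v = v := by rw [← mulVec_mulVec, ← hw, hv]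
  have hwP : (L * M) *ᵥ w = w := by rw [hc, ← mulVec_mulVec, hv, hw]
  have k1 : (L + vecMulVec v v) * (M - (1 / (1 + v ⬝ᵥ w)) • vecMulVec w w) = L * M := by
    rw [add_mul, mul_sub, mul_sub, mul_smul_comm, mul_smul_comm, mul_vecMulVec, hv,
      vecMulVec_mul, hvM, vecMulVec_mul_vecMulVec]
    ext i j
    simp [vecMulVec_apply]
    field_simp
    ring
  have k2 : (M - (1 / (1 + v ⬝ᵥ w)) • vecMulVec w w) * (L + vecMulVec v v) = L * M := by
    have := congrArg transpose k1
    rw [transpose_mul, h3] at this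
    simpa [transpose_vecMulVec, hLt, hMt] using this
  refine ⟨hpos, ?_, ?_, ?_, ?_⟩
  · rw [k1, mul_add, h1, mul_vecMulVec, hPv]
  · rw [k2, mul_sub, mul_smul_comm, mul_vecMulVec, hwP, hc, h2]
  · rw [k1, h3]
  · rw [k2, h3]
end

section
/- Let L be a real symmetric positive semidefinite n×n matrix with Moore–Penrose pseudoinverse M, and let v ∈ ℝⁿ satisfy L·M·v = v. Let M' be the Moore–Penrose pseudoinverse of L + v·vᵀ. Then tr(M) − tr(M') = ‖M·v‖² / (1 + vᵀ·M·v), where ‖·‖ is the Euclidean norm. -/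
open Matrix

theorem mp_unique {n : ℕ} {L M N : Matrix (Fin n) (Fin n) ℝ}
    (h : IsMoorePenroseInv L M) (k : IsMoorePenroseInv L N) : M = N := by
  obtain ⟨h1, h2, h3, h4⟩ := h
  obtain ⟨k1, k2, k3, k4⟩ := k
  have e1 : L * M = L * N := by
    calc L * M = (L * M)ᵀ := h3.symm
      _ = ((L * N) * (L * M))ᵀ := by rw [← Matrix.mul_assoc (L * N), k1]
      _ = (L * M) * (L * N) := by rw [transpose_mul, h3, k3]
      _ = L * N := by rw [← Matrix.mul_assoc (L * M), h1]
  have e2 : M * L = N * L := by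
    calc M * L = (M * L)ᵀ := h4.symm
      _ = ((M * L) * (N * L))ᵀ := by
        rw [Matrix.mul_assoc M L, ← Matrix.mul_assoc L N, k1]
      _ = (N * L) * (M * L) := by rw [transpose_mul, h4, k4]
      _ = N * L := by rw [Matrix.mul_assoc N L, ← Matrix.mul_assoc L M, h1]
  calc M = M * L * M := h2.symm
    _ = N * L * N := by rw [e2, Matrix.mul_assoc, e1, ← Matrix.mul_assoc]
    _ = N := k2

theorem trace_decrease_of_rank_one_update {n : ℕ}
    (L M M' : Matrix (Fin n) (Fin n) ℝ) (hL : L.PosSemidef)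
    (hM : IsMoorePenroseInv L M)
    (v : Fin n → ℝ) (hv : L.mulVec (M.mulVec v) = v)
    (hM' : IsMoorePenroseInv (L + vecMulVec v v) M') :
    M.trace - M'.trace =
      (∑ i, (M.mulVec v i) ^ 2) / (1 + v ⬝ᵥ M.mulVec v) := by
  have hLs : Lᵀ = L := by simpa using hL.isHermitian.eq
  have hMs : Mᵀ = M := by
    refine mp_unique (L := L) ?_ hM
    obtain ⟨h1, h2, h3, h4⟩ := hM
    refine ⟨?_, ?_, ?_, ?_⟩
    · have := congrArg transpose h1
      simpa [transpose_mul, hLs, Matrix.mul_assoc] using this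
    · have := congrArg transpose h2
      simpa [transpose_mul, hLs, Matrix.mul_assoc] using this
    · have := congrArg transpose h4
      simpa [transpose_mul, hLs] using this
    · have := congrArg transpose h3
      simpa [transpose_mul, hLs] using this
  obtain ⟨h1, h2, h3, h4⟩ := hM
  generalize hu : M *ᵥ v = u at *
  have hvM : v ᵥ* M = u := by rw [← hu, ← mulVec_transpose, hMs]
  have huL : u ᵥ* L = v := by rw [← mulVec_transpose, hLs, hv]
  have hc : 0 ≤ v ⬝ᵥ u := by
    have := hL.dotProduct_mulVec_nonneg u
    rw [hv, dotProduct_comm] at this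
    simpa using this
  have hcs : u ⬝ᵥ v = v ⬝ᵥ u := dotProduct_comm _ _
  generalize hcd : v ⬝ᵥ u = c at *
  have hs : 1 + c ≠ 0 := by positivity
  have key : (1 : ℝ) - (1 + c)⁻¹ - (1 + c)⁻¹ * c = 0 := by field_simp; ring
  have hAN : (L + vecMulVec v v) * (M - (1 + c)⁻¹ • vecMulVec u u) = L * M := by
    have : (L + vecMulVec v v) * (M - (1 + c)⁻¹ • vecMulVec u u)
        = L * M + ((1 : ℝ) - (1 + c)⁻¹ - (1 + c)⁻¹ * c) • vecMulVec v u := by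
      simp only [Matrix.add_mul, Matrix.mul_sub, Matrix.mul_smul, mul_vecMulVec, vecMulVec_mul,
        add_mulVec, sub_mulVec, smul_mulVec, vecMulVec_mulVec, hv, hvM, hcd]
      ext i j
      simp [vecMulVec_apply]
      ring
    rw [this, key, zero_smul, add_zero]
  have hNA : (M - (1 + c)⁻¹ • vecMulVec u u) * (L + vecMulVec v v) = M * L := by
    have : (M - (1 + c)⁻¹ • vecMulVec u u) * (L + vecMulVec v v)
        = M * L + ((1 : ℝ) - (1 + c)⁻¹ - (1 + c)⁻¹ * c) • vecMulVec u v := by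
      simp only [Matrix.mul_add, Matrix.sub_mul, Matrix.smul_mul, mul_vecMulVec, vecMulVec_mul,
        add_mulVec, sub_mulVec, smul_mulVec, vecMulVec_mulVec, hu, huL, hcs]
      ext i j
      simp [vecMulVec_apply]
      ring
    rw [this, key, zero_smul, add_zero]
  have hN : IsMoorePenroseInv (L + vecMulVec v v) (M - (1 + c)⁻¹ • vecMulVec u u) := by
    refine ⟨?_, ?_, ?_, ?_⟩
    · rw [hAN, Matrix.mul_add, h1, mul_vecMulVec, ← mulVec_mulVec, hu, hv]
    · rw [hNA, Matrix.mul_sub, h2, Matrix.mul_smul, mul_vecMulVec, ← mulVec_mulVec, hv, hu]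
    · rw [hAN, h3]
    · rw [hNA, h4]
  rw [mp_unique hM' hN, trace_sub, trace_smul, trace_vecMulVec, dotProduct, smul_eq_mul]
  simp only [pow_two]
  field_simp
  ring
end

section
/- Let L be a real symmetric positive semidefinite n×n matrix with Moore–Penrose pseudoinverse M, and let v ∈ ℝⁿ satisfy L·M·v = v. Let M' be the Moore–Penrose pseudoinverse of L + v·vᵀ. Then vᵀ·M'·v = (vᵀ·M·v) / (1 + vᵀ·M·v). -/
open Matrix

theorem effective_resistance_after_rank_one_update {n : ℕ}
    (L M M' : Matrix (Fin n) (Fin n) ℝ) (hL : L.PosSemidef)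
    (hM : IsMoorePenroseInv L M)
    (v : Fin n → ℝ) (hv : L.mulVec (M.mulVec v) = v)
    (hM' : IsMoorePenroseInv (L + vecMulVec v v) M') :
    v ⬝ᵥ M'.mulVec v = (v ⬝ᵥ M.mulVec v) / (1 + v ⬝ᵥ M.mulVec v) := by
  obtain ⟨h1, -, -, -⟩ := hM'
  have hLt : Lᵀ = L := by
    have h := hL.isHermitian.eq
    rwa [conjTranspose_eq_transpose_of_trivial] at h
  set x := M.mulVec v with hx
  set r := v ⬝ᵥ x with hr
  set A := L + vecMulVec v v with hA
  have hAt : Aᵀ = A := by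
    rw [hA, transpose_add, hLt, transpose_vecMulVec]
  have hr0 : 0 ≤ r := by
    have h := hL.dotProduct_mulVec_nonneg x
    rw [hv, star_trivial, dotProduct_comm] at h
    exact h
  have hAx : A.mulVec x = (1 + r) • v := by
    rw [hA, add_mulVec, hv]
    ext i
    simp [vecMulVec_mulVec, ← hr]
    ring
  have hxA : x ᵥ* A = (1 + r) • v := by
    rw [← hAx, ← mulVec_transpose, hAt]
  have key : x ⬝ᵥ (A * M' * A).mulVec x = x ⬝ᵥ A.mulVec x := by rw [h1]
  rw [← mulVec_mulVec, ← mulVec_mulVec, hAx, dotProduct_mulVec x A, hxA, mulVec_smul,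
    smul_dotProduct, dotProduct_smul, dotProduct_smul, dotProduct_comm x v, ← hr] at key
  simp only [smul_eq_mul] at key
  have hne : 1 + r ≠ 0 := by positivity
  rw [eq_div_iff hne, mul_comm]
  exact mul_left_cancel₀ hne key
end

section
/- Let L be a real symmetric positive semidefinite n×n matrix with an orthonormal eigenbasis u_1, …, u_n of ℝⁿ and corresponding eigenvalues λ_1, …, λ_n (so L·u_i = λ_i·u_i), and let M be the Moore–Penrose pseudoinverse of L. Then for all indices a, b: ‖M·(e_a − e_b)‖² = ∑_{i : λ_i ≠ 0} (u_i[a] − u_i[b])² / λ_i², where ‖·‖ is the Euclidean norm. -/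
open Matrix Finset

theorem spectral_biharmonic_distance {n : ℕ}
    (L M : Matrix (Fin n) (Fin n) ℝ) (hL : L.PosSemidef)
    (hM : IsMoorePenroseInv L M)
    (u : Fin n → (Fin n → ℝ)) (lam : Fin n → ℝ)
    (horth : ∀ i j : Fin n, u i ⬝ᵥ u j = if i = j then 1 else 0)
    (heig : ∀ i : Fin n, L.mulVec (u i) = lam i • u i)
    (a b : Fin n) :
    ∑ j : Fin n, (M.mulVec (Pi.single a 1 - Pi.single b 1) j) ^ 2 =
      ∑ i ∈ Finset.univ.filter (fun i : Fin n => lam i ≠ 0),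
        (u i a - u i b) ^ 2 / lam i ^ 2 := by
  obtain ⟨h1, h2, h3, h4⟩ := hM
  have hT : Lᵀ = L := by
    have := hL.isHermitian.eq
    rwa [Matrix.conjTranspose_eq_transpose_of_trivial] at this
  have hvec : ∀ i, u i ᵥ* L = lam i • u i := fun i => by
    rw [← heig i, ← Matrix.vecMul_transpose, hT]
  generalize hv : (Pi.single a 1 - Pi.single b 1 : Fin n → ℝ) = v
  have huv : ∀ i, u i ⬝ᵥ v = u i a - u i b := fun i => by
    rw [← hv, dotProduct_sub, dotProduct_single, dotProduct_single]; simp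
  have hU : (Matrix.of u) * (Matrix.of u)ᵀ = 1 := by
    ext i j
    rw [Matrix.mul_apply, Matrix.one_apply, ← horth i j]
    rfl
  have hU' : (Matrix.of u)ᵀ * (Matrix.of u) = 1 := mul_eq_one_comm.mp hU
  have hpars : ∀ w : Fin n → ℝ, ∑ j, (w j) ^ 2 = ∑ i, (u i ⬝ᵥ w) ^ 2 := fun w => by
    have e1 : ∑ j, (w j) ^ 2 = w ⬝ᵥ w := by
      simp [dotProduct, sq]
    have e2 : ∑ i, (u i ⬝ᵥ w) ^ 2 = (Matrix.of u *ᵥ w) ⬝ᵥ (Matrix.of u *ᵥ w) := by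
      simp [dotProduct, sq, Matrix.mulVec]
    rw [e1, e2, Matrix.dotProduct_mulVec, ← Matrix.mulVec_transpose, Matrix.mulVec_mulVec, hU',
      Matrix.one_mulVec]
  rw [hpars, Finset.sum_filter]
  refine Finset.sum_congr rfl fun i _ => ?_
  split_ifs with hl
  · have k1 : (L * M) *ᵥ u i = u i := by
      have : lam i • ((L * M) *ᵥ u i) = lam i • u i := by
        rw [← Matrix.mulVec_smul, ← heig i, Matrix.mulVec_mulVec, h1]
      exact smul_right_injective _ hl this
    have k2 : lam i * (u i ⬝ᵥ M *ᵥ v) = u i ⬝ᵥ v := by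
      rw [← smul_eq_mul, ← smul_dotProduct, ← hvec i, ← Matrix.dotProduct_mulVec,
        Matrix.mulVec_mulVec, Matrix.dotProduct_mulVec, ← Matrix.mulVec_transpose, h3, k1]
    rw [← huv, ← k2, mul_pow, mul_div_cancel_left₀ _ (pow_ne_zero 2 hl)]
  · have hl0 : lam i = 0 := not_not.mp hl
    have k : M = L * (Mᵀ * M) := by
      rw [← Matrix.mul_assoc]
      conv_lhs => rw [← h2, ← h4, Matrix.transpose_mul, hT]
    have k2 : u i ⬝ᵥ M *ᵥ v = 0 := by
      rw [k, ← Matrix.mulVec_mulVec, Matrix.dotProduct_mulVec, hvec i, hl0, zero_smul,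
        zero_dotProduct]
    rw [k2]; simp
end

section
/- Let 2 ≤ c ≤ n, let λ_2 ≤ λ_3 ≤ … ≤ λ_n be positive real numbers, and let x_2, …, x_n be real numbers with ∑_{i=2}^{n} x_i² = 2. Then ∑_{i=2}^{n} x_i²/λ_i ≤ 2/λ_c + ∑_{i=2}^{c} (1/λ_i − 1/λ_c)·x_i². -/
open Finset

theorem effective_resistance_upper_bound (n c : ℕ) (hc2 : 2 ≤ c) (hcn : c ≤ n)
    (lam x : ℕ → ℝ)
    (hpos : ∀ i ∈ Finset.Icc 2 n, 0 < lam i)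
    (hmono : ∀ i ∈ Finset.Icc 2 n, ∀ j ∈ Finset.Icc 2 n, i ≤ j → lam i ≤ lam j)
    (hx : ∑ i ∈ Finset.Icc 2 n, x i ^ 2 = 2) :
    ∑ i ∈ Finset.Icc 2 n, x i ^ 2 / lam i ≤
      2 / lam c +
        ∑ i ∈ Finset.Icc 2 c, (1 / lam i - 1 / lam c) * x i ^ 2 := by
  have hc : c ∈ Finset.Icc 2 n := Finset.mem_Icc.2 ⟨hc2, hcn⟩
  have hsub : Finset.Icc 2 c ⊆ Finset.Icc 2 n := Finset.Icc_subset_Icc le_rfl hcn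
  have h1 : ∑ i ∈ Finset.Icc 2 n, x i ^ 2 / lam i =
      2 / lam c + ∑ i ∈ Finset.Icc 2 n, (1 / lam i - 1 / lam c) * x i ^ 2 := by
    rw [← hx, Finset.sum_div, ← Finset.sum_add_distrib]
    refine Finset.sum_congr rfl fun i _ => ?_
    ring
  have h2 : ∑ i ∈ Finset.Icc 2 n \ Finset.Icc 2 c, (1 / lam i - 1 / lam c) * x i ^ 2 ≤ 0 := by
    refine Finset.sum_nonpos fun i hi => ?_
    rw [Finset.mem_sdiff] at hi
    have hci : c ≤ i := by
      have h3 := hi.1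
      have h4 := hi.2
      simp only [Finset.mem_Icc] at h3 h4
      omega
    have h5 : 1 / lam i ≤ 1 / lam c :=
      one_div_le_one_div_of_le (hpos c hc) (hmono c hc i hi.1 hci)
    exact mul_nonpos_of_nonpos_of_nonneg (by linarith) (sq_nonneg _)
  rw [h1, ← Finset.sum_sdiff hsub]
  linarith
end

section
/- Let 2 ≤ c ≤ n, let λ_2 ≤ λ_3 ≤ … ≤ λ_n be positive real numbers, and let x_2, …, x_n be real numbers with ∑_{i=2}^{n} x_i² = 2. Then the ratio (∑_{i=2}^{n} x_i²/λ_i²) / (1 + ∑_{i=2}^{n} x_i²/λ_i) satisfies the two-sided bound: [2/λ_n² + ∑_{i=2}^{c} (1/λ_i² − 1/λ_n²)·x_i²] / [1 + 2/λ_c + ∑_{i=2}^{c} (1/λ_i − 1/λ_c)·x_i²] ≤ (∑_{i=2}^{n} x_i²/λ_i²) / (1 + ∑_{i=2}^{n} x_i²/λ_i) ≤ [2/λ_c² + ∑_{i=2}^{c} (1/λ_i² − 1/λ_c²)·x_i²] / [1 + 2/λ_n + ∑_{i=2}^{c} (1/λ_i − 1/λ_n)·x_i²]. -/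
open Finset

theorem trunc_upper (n c : ℕ) (hcn : c ≤ n) (f x : ℕ → ℝ) (t : ℝ)
    (hx : ∑ i ∈ Finset.Icc 2 n, x i ^ 2 = 2)
    (hf : ∀ i ∈ Finset.Icc 2 n, c ≤ i → f i ≤ t) :
    ∑ i ∈ Finset.Icc 2 n, f i * x i ^ 2 ≤
      2 * t + ∑ i ∈ Finset.Icc 2 c, (f i - t) * x i ^ 2 := by
  have hsub : Finset.Icc 2 c ⊆ Finset.Icc 2 n := Finset.Icc_subset_Icc_right hcn
  have h1 := Finset.sum_sdiff (f := fun i => (f i - t) * x i ^ 2) hsub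
  have h2 : ∑ i ∈ Finset.Icc 2 n \ Finset.Icc 2 c, (f i - t) * x i ^ 2 ≤ 0 := by
    apply Finset.sum_nonpos
    intro i hi
    have hi' := Finset.mem_sdiff.mp hi
    have h3 : c ≤ i := by
      have := hi'.1
      have := hi'.2
      simp only [Finset.mem_Icc] at *
      omega
    have := hf i hi'.1 h3
    exact mul_nonpos_of_nonpos_of_nonneg (by linarith) (sq_nonneg _)
  have h4 : ∑ i ∈ Finset.Icc 2 n, (f i - t) * x i ^ 2
      = ∑ i ∈ Finset.Icc 2 n, f i * x i ^ 2 - 2 * t := by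
    simp only [sub_mul, Finset.sum_sub_distrib, ← Finset.mul_sum, hx]
    ring
  linarith

theorem trunc_lower (n c : ℕ) (hcn : c ≤ n) (f x : ℕ → ℝ) (t : ℝ)
    (hx : ∑ i ∈ Finset.Icc 2 n, x i ^ 2 = 2)
    (hf : ∀ i ∈ Finset.Icc 2 n, c ≤ i → t ≤ f i) :
    2 * t + ∑ i ∈ Finset.Icc 2 c, (f i - t) * x i ^ 2 ≤
      ∑ i ∈ Finset.Icc 2 n, f i * x i ^ 2 := by
  have h := trunc_upper n c hcn (fun i => - f i) x (-t) hx
    (fun i hi hci => neg_le_neg (hf i hi hci))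
  have h2 : ∑ i ∈ Finset.Icc 2 c, (- f i - -t) * x i ^ 2
      = - ∑ i ∈ Finset.Icc 2 c, (f i - t) * x i ^ 2 := by
    rw [← Finset.sum_neg_distrib]
    exact Finset.sum_congr rfl (fun i _ => by ring)
  simp only [neg_mul, Finset.sum_neg_distrib] at h
  linarith

theorem gain_two_sided_bound (n c : ℕ) (hc2 : 2 ≤ c) (hcn : c ≤ n)
    (lam x : ℕ → ℝ)
    (hpos : ∀ i ∈ Finset.Icc 2 n, 0 < lam i)
    (hmono : ∀ i ∈ Finset.Icc 2 n, ∀ j ∈ Finset.Icc 2 n, i ≤ j → lam i ≤ lam j)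
    (hx : ∑ i ∈ Finset.Icc 2 n, x i ^ 2 = 2) :
    (2 / lam n ^ 2 +
        ∑ i ∈ Finset.Icc 2 c, (1 / lam i ^ 2 - 1 / lam n ^ 2) * x i ^ 2) /
      (1 + 2 / lam c +
        ∑ i ∈ Finset.Icc 2 c, (1 / lam i - 1 / lam c) * x i ^ 2) ≤
      (∑ i ∈ Finset.Icc 2 n, x i ^ 2 / lam i ^ 2) /
        (1 + ∑ i ∈ Finset.Icc 2 n, x i ^ 2 / lam i) ∧
    (∑ i ∈ Finset.Icc 2 n, x i ^ 2 / lam i ^ 2) /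
        (1 + ∑ i ∈ Finset.Icc 2 n, x i ^ 2 / lam i) ≤
      (2 / lam c ^ 2 +
        ∑ i ∈ Finset.Icc 2 c, (1 / lam i ^ 2 - 1 / lam c ^ 2) * x i ^ 2) /
      (1 + 2 / lam n +
        ∑ i ∈ Finset.Icc 2 c, (1 / lam i - 1 / lam n) * x i ^ 2) := by
  have hn : n ∈ Finset.Icc 2 n := Finset.mem_Icc.mpr ⟨hc2.trans hcn, le_rfl⟩
  have hc : c ∈ Finset.Icc 2 n := Finset.mem_Icc.mpr ⟨hc2, hcn⟩
  have hln := hpos n hn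
  have hlc := hpos c hc
  have e1 : ∑ i ∈ Finset.Icc 2 n, x i ^ 2 / lam i
      = ∑ i ∈ Finset.Icc 2 n, 1 / lam i * x i ^ 2 :=
    Finset.sum_congr rfl (fun i _ => by ring)
  have e2 : ∑ i ∈ Finset.Icc 2 n, x i ^ 2 / lam i ^ 2
      = ∑ i ∈ Finset.Icc 2 n, 1 / lam i ^ 2 * x i ^ 2 :=
    Finset.sum_congr rfl (fun i _ => by ring)
  have u1 := trunc_upper n c hcn (fun i => 1 / lam i) x (1 / lam c) hx
    (fun i hi hci => one_div_le_one_div_of_le hlc (hmono c hc i hi hci))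
  have u2 := trunc_upper n c hcn (fun i => 1 / lam i ^ 2) x (1 / lam c ^ 2) hx
    (fun i hi hci => one_div_le_one_div_of_le (by positivity)
      (pow_le_pow_left₀ hlc.le (hmono c hc i hi hci) 2))
  have l1 := trunc_lower n c hcn (fun i => 1 / lam i) x (1 / lam n) hx
    (fun i hi _ => one_div_le_one_div_of_le (hpos i hi)
      (hmono i hi n hn (Finset.mem_Icc.mp hi).2))
  have l2 := trunc_lower n c hcn (fun i => 1 / lam i ^ 2) x (1 / lam n ^ 2) hx
    (fun i hi _ => one_div_le_one_div_of_le (pow_pos (hpos i hi) 2)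
      (pow_le_pow_left₀ (hpos i hi).le (hmono i hi n hn (Finset.mem_Icc.mp hi).2) 2))
  simp only [← e1, ← e2, mul_one_div] at u1 u2 l1 l2
  have p1 : 0 ≤ ∑ i ∈ Finset.Icc 2 n, x i ^ 2 / lam i :=
    Finset.sum_nonneg (fun i hi => div_nonneg (sq_nonneg _) (hpos i hi).le)
  have p2 : 0 ≤ ∑ i ∈ Finset.Icc 2 n, x i ^ 2 / lam i ^ 2 :=
    Finset.sum_nonneg (fun i hi => by positivity)
  have p3 : 0 ≤ ∑ i ∈ Finset.Icc 2 c, (1 / lam i - 1 / lam n) * x i ^ 2 := by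
    refine Finset.sum_nonneg (fun i hi => mul_nonneg (sub_nonneg.mpr ?_) (sq_nonneg _))
    have hi' : i ∈ Finset.Icc 2 n := Finset.Icc_subset_Icc_right hcn hi
    exact one_div_le_one_div_of_le (hpos i hi') (hmono i hi' n hn (Finset.mem_Icc.mp hi').2)
  have p4 : 0 < 2 / lam n := by positivity
  constructor
  · exact div_le_div₀ p2 l2 (by linarith) (by linarith)
  · exact div_le_div₀ (p2.trans u2) u2 (by linarith) (by linarith)
end
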